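/- Let X be a real vector space and let Z be a subset of a real vector space that is closed under multiplication by nonnegative scalars (a cone). Suppose φ : Z × X → Z satisfies φ(z,0) = z and the degree-one homogeneity φ(λz, λd) = λ φ(z,d) for all λ ≥ 0, z ∈ Z, d ∈ X. Let p > 0. If f : Z → EReal is positively homogeneous of degree p, i.e. f(λz) = λ^p · f(z) for all λ > 0 and z ∈ Z, then Af and A^∞f := lim_n A^n f are positively homogeneous of degree p as well. -/

import Mathlib

/-- An `EReal`-valued function on a real vector space is concave
(with the convention `⊤ + ⊥ = ⊥` of `EReal`). -/
def IsEConcave {X : Type*} [AddCommGroup X] [Module ℝ X] (ψ : X → EReal) : Prop :=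
  ∀ x y : X, ∀ a b : ℝ, 0 ≤ a → 0 ≤ b → a + b = 1 →
    (a : EReal) * ψ x + (b : EReal) * ψ y ≤ ψ (a • x + b • y)

/-- The concave envelope `g^♯` of `g : X → EReal`: the pointwise infimum of all
concave functions dominating `g`. -/
noncomputable def concaveEnvelope {X : Type*} [AddCommGroup X] [Module ℝ X]
    (g : X → EReal) (x : X) : EReal :=
  ⨅ ψ : {ψ : X → EReal // IsEConcave ψ ∧ ∀ y, g y ≤ ψ y}, ψ.1 x

/-- The operator `A`: `Ag(z) = (g ∘ φ(z,·))^♯(0)`. -/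
noncomputable def Aop {X Z : Type*} [AddCommGroup X] [Module ℝ X]
    (φ : Z → X → Z) (g : Z → EReal) : Z → EReal :=
  fun z => concaveEnvelope (fun d => g (φ z d)) 0

/-!
The operator `A` commutes with two kinds of maps on functions: with `g ↦ k * g` for `k > 0`, and
with `g ↦ g ∘ σ` whenever `σ` intertwines the maps `φ(z,·)` along a linear automorphism of `X`.
Homogeneity of `f` says that, for `σ` the dilation by `c` and `k = c ^ p`, these two maps agree on
`f`; hence they agree on every `A^n f`, and then on `⨆ n, A^n f` because `x ↦ k * x` is an order
automorphism of `EReal`. Both commutations hold because multiplication by `k` and composition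
with a linear automorphism of `X` are invertible, monotone and preserve concavity, hence commute
with the concave envelope.
-/

theorem ereal_coe_inv_mul_cancel_left {k : ℝ} (hk : k ≠ 0) (x : EReal) :
    ((k⁻¹ : ℝ) : EReal) * (k * x) = x := by
  rw [← mul_assoc, ← EReal.coe_mul, inv_mul_cancel₀ hk, EReal.coe_one, one_mul]

theorem monotone_ereal_coe_mul_left {k : ℝ} (hk : 0 ≤ k) : Monotone fun x : EReal => k * x :=
  fun _ _ h => mul_le_mul_of_nonneg_left h (EReal.coe_nonneg.2 hk)

/-- Multiplication by a positive real number, as an order automorphism of `EReal`. It replaces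
`OrderIso.mulLeft₀`, which is unavailable because `EReal` is not a group with zero. -/
noncomputable def erealMulLeft (k : ℝ) (hk : 0 < k) : EReal ≃o EReal :=
  Equiv.toOrderIso
    { toFun := fun x => k * x
      invFun := fun x => (k⁻¹ : ℝ) * x
      left_inv := ereal_coe_inv_mul_cancel_left hk.ne'
      right_inv := fun x => by simpa using ereal_coe_inv_mul_cancel_left (inv_ne_zero hk.ne') x }
    (monotone_ereal_coe_mul_left hk.le) (monotone_ereal_coe_mul_left (inv_nonneg.2 hk.le))

section ConcaveEnvelope

variable {X Y : Type*} [AddCommGroup X] [Module ℝ X] [AddCommGroup Y] [Module ℝ Y]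

theorem IsEConcave.comp_affineMap {ψ : Y → EReal} (hψ : IsEConcave ψ) (L : X →ᵃ[ℝ] Y) :
    IsEConcave (ψ ∘ L) := fun x y a b ha hb hab => by
  simpa only [Function.comp_apply, Convex.combo_affine_apply hab] using hψ (L x) (L y) a b ha hb hab

theorem IsEConcave.const_mul {ψ : X → EReal} (hψ : IsEConcave ψ) {k : ℝ} (hk : 0 ≤ k) :
    IsEConcave fun x => k * ψ x := fun x y a b ha hb hab =>
  calc (a : EReal) * (k * ψ x) + b * (k * ψ y)
      = k * (a * ψ x + b * ψ y) := by
        rw [EReal.left_distrib_of_nonneg_of_ne_top (EReal.coe_nonneg.2 hk) (EReal.coe_ne_top k),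
          mul_left_comm, mul_left_comm (b : EReal)]
    _ ≤ k * ψ (a • x + b • y) := monotone_ereal_coe_mul_left hk (hψ x y a b ha hb hab)

theorem isEConcave_concaveEnvelope (g : X → EReal) : IsEConcave (concaveEnvelope g) :=
  fun x y a b ha hb hab => le_iInf fun ψ =>
    calc (a : EReal) * concaveEnvelope g x + b * concaveEnvelope g y
        ≤ a * ψ.1 x + b * ψ.1 y :=
          add_le_add (monotone_ereal_coe_mul_left ha (iInf_le _ ψ))
            (monotone_ereal_coe_mul_left hb (iInf_le _ ψ))
      _ ≤ ψ.1 (a • x + b • y) := ψ.2.1 x y a b ha hb hab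

theorem le_concaveEnvelope (g : X → EReal) : g ≤ concaveEnvelope g :=
  fun x => le_iInf fun ψ => ψ.2.2 x

theorem concaveEnvelope_le {g ψ : X → EReal} (hψ : IsEConcave ψ) (h : g ≤ ψ) :
    concaveEnvelope g ≤ ψ :=
  fun x => iInf_le (fun ψ : {ψ : X → EReal // IsEConcave ψ ∧ ∀ y, g y ≤ ψ y} => ψ.1 x) ⟨ψ, hψ, h⟩

theorem concaveEnvelope_comp_affineMap_le (g : Y → EReal) (L : X →ᵃ[ℝ] Y) :
    concaveEnvelope (g ∘ L) ≤ concaveEnvelope g ∘ L :=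
  concaveEnvelope_le ((isEConcave_concaveEnvelope g).comp_affineMap L)
    fun x => le_concaveEnvelope g (L x)

theorem concaveEnvelope_comp_affineEquiv (g : Y → EReal) (L : X ≃ᵃ[ℝ] Y) :
    concaveEnvelope (g ∘ L) = concaveEnvelope g ∘ L := by
  refine (concaveEnvelope_comp_affineMap_le g L.toAffineMap).antisymm fun x => ?_
  have h := concaveEnvelope_comp_affineMap_le (g ∘ L) L.symm.toAffineMap (L x)
  simpa [Function.comp_def] using h

theorem concaveEnvelope_const_mul_le (g : X → EReal) {k : ℝ} (hk : 0 ≤ k) (x : X) :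
    concaveEnvelope (fun y => k * g y) x ≤ k * concaveEnvelope g x :=
  concaveEnvelope_le ((isEConcave_concaveEnvelope g).const_mul hk)
    (fun y => monotone_ereal_coe_mul_left hk (le_concaveEnvelope g y)) x

theorem concaveEnvelope_const_mul (g : X → EReal) {k : ℝ} (hk : 0 < k) (x : X) :
    concaveEnvelope (fun y => k * g y) x = k * concaveEnvelope g x := by
  let e := erealMulLeft k hk
  refine (concaveEnvelope_const_mul_le g hk.le x).antisymm (e.le_symm_apply.1 ?_)
  calc concaveEnvelope g x = concaveEnvelope (fun y => e.symm (e (g y))) x := by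
        simp only [e.symm_apply_apply]
    _ ≤ e.symm (concaveEnvelope (fun y => e (g y)) x) :=
        concaveEnvelope_const_mul_le (fun y => e (g y)) (inv_nonneg.2 hk.le) x

end ConcaveEnvelope

section Aop

variable {X X' Z Z' : Type*} [AddCommGroup X] [Module ℝ X] [AddCommGroup X'] [Module ℝ X']

theorem Aop_semiconj_comp {φ : Z → X → Z} {φ' : Z' → X' → Z'} {σ : Z → Z'} (L : X ≃ₗ[ℝ] X')
    (hφ : ∀ z d, φ' (σ z) (L d) = σ (φ z d)) :
    Function.Semiconj (fun g : Z' → EReal => g ∘ σ) (Aop φ') (Aop φ) := fun g => by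
  funext z
  have h := congrFun
    (concaveEnvelope_comp_affineEquiv (fun d => g (φ' (σ z) d)) L.toAffineEquiv) 0
  simpa [Aop, Function.comp_def, hφ] using h.symm

theorem Aop_commute_const_mul (φ : Z → X → Z) {k : ℝ} (hk : 0 < k) :
    Function.Commute (fun (g : Z → EReal) z => k * g z) (Aop φ) := fun g =>
  funext fun z => (concaveEnvelope_const_mul (fun d => g (φ z d)) hk 0).symm

variable {φ : Z → X → Z} {σ : Z → Z} {k : ℝ} {f : Z → EReal}

theorem Aop_iterate_homogeneous (L : X ≃ₗ[ℝ] X) (hφ : ∀ z d, φ (σ z) (L d) = σ (φ z d))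
    (hk : 0 < k) (hf : ∀ z, f (σ z) = k * f z) (n : ℕ) (z : Z) :
    (Aop φ)^[n] f (σ z) = k * (Aop φ)^[n] f z := by
  suffices (Aop φ)^[n] f ∘ σ = fun z => k * (Aop φ)^[n] f z from congrFun this z
  calc (Aop φ)^[n] f ∘ σ
      = (Aop φ)^[n] (f ∘ σ) := (Aop_semiconj_comp L hφ).iterate_right n f
    _ = (Aop φ)^[n] fun z => k * f z := congrArg _ (funext hf)
    _ = fun z => k * (Aop φ)^[n] f z := ((Aop_commute_const_mul φ hk).iterate_right n f).symm

theorem Aop_homogeneous_general (L : X ≃ₗ[ℝ] X) (hφ : ∀ z d, φ (σ z) (L d) = σ (φ z d))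
    (hk : 0 < k) (hf : ∀ z, f (σ z) = k * f z) :
    (∀ z, Aop φ f (σ z) = k * Aop φ f z) ∧
      ∀ z, (⨆ n : ℕ, (Aop φ)^[n] f (σ z)) = k * ⨆ n : ℕ, (Aop φ)^[n] f z := by
  have iterate_hom := Aop_iterate_homogeneous L hφ hk hf
  refine ⟨iterate_hom 1, fun z => ?_⟩
  simp only [iterate_hom]
  exact ((erealMulLeft k hk).map_iSup fun n => (Aop φ)^[n] f z).symm

end Aop

/-- On a cone `Z` (a subset of a real vector space closed under
multiplication by nonnegative scalars), if `φ` is positively homogeneous of degree one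
(and `φ(z,0) = z`) and `f` is positively homogeneous of degree `p > 0`, then `Af` and
`A^∞f = lim_n Aⁿf` are positively homogeneous of degree `p` as well. -/
theorem Aop_homogeneous {X W : Type*} [AddCommGroup X] [Module ℝ X]
    [AddCommGroup W] [Module ℝ W]
    (Zset : Set W) (hZne : Zset.Nonempty)
    (hZcone : ∀ (c : ℝ), 0 ≤ c → ∀ z ∈ Zset, c • z ∈ Zset)
    (φ : Zset → X → Zset) (hφ0 : ∀ z, φ z 0 = z)
    (hφhom : ∀ (c : ℝ) (hc : 0 ≤ c) (z : Zset) (d : X),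
      (φ ⟨c • (z : W), hZcone c hc z z.2⟩ (c • d) : W) = c • (φ z d : W))
    (p : ℝ) (hp : 0 < p) (f : Zset → EReal)
    (hf : ∀ (c : ℝ) (hc : 0 < c) (z : Zset),
      f ⟨c • (z : W), hZcone c hc.le z z.2⟩ = ((c ^ p : ℝ) : EReal) * f z) :
    (∀ (c : ℝ) (hc : 0 < c) (z : Zset),
      Aop φ f ⟨c • (z : W), hZcone c hc.le z z.2⟩ = ((c ^ p : ℝ) : EReal) * Aop φ f z) ∧
    (∀ (c : ℝ) (hc : 0 < c) (z : Zset),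
      (⨆ n : ℕ, (Aop φ)^[n] f ⟨c • (z : W), hZcone c hc.le z z.2⟩) =
        ((c ^ p : ℝ) : EReal) * ⨆ n : ℕ, (Aop φ)^[n] f z) := by
  have hom (c : ℝ) (hc : 0 < c) := Aop_homogeneous_general (LinearEquiv.smulOfNeZero ℝ X c hc.ne')
    (fun z d => Subtype.ext (hφhom c hc.le z d)) (Real.rpow_pos_of_pos hc p) (hf c hc)
  exact ⟨fun c hc => (hom c hc).1, fun c hc => (hom c hc).2⟩
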